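/- arXiv:1210.3511 — 3 statements merged into one kernel-verified Lean document; each statement's English description precedes it below -/
import Mathlib

section
/- Let p > 1 be a real number and let f : ℝ → ℝ be a Schwartz function (smooth with all derivatives rapidly decreasing) that satisfies the fourth-order similarity ODE -f''''(y) + (1/4)·y·f'(y) + (1/(p-1))·f(y) + |f(y)|^p = 0 for all y ∈ ℝ. Then the integral identity ∫_ℝ |f(y)|^p dy = ((p-5)/(4(p-1)))·∫_ℝ f(y) dy holds. -/
open MeasureTheory

/-!
Integrate the equation over `ℝ`. The top-order term is a derivative of a Schwartz function and
integrates to zero, while integration by parts turns the drift `∫ y f'` into `-∫ f`. What remains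
expresses the integral of the nonlinearity as a multiple of `∫ f`.
-/

open scoped SchwartzMap

section SchwartzIntegral

variable {F : Type*} [NormedAddCommGroup F] [NormedSpace ℝ F]

theorem integrable_smul_schwartz {E : Type*} [NormedAddCommGroup E] [NormedSpace ℝ E]
    [MeasurableSpace E] [BorelSpace E] [SecondCountableTopology E]
    {μ : Measure E} [μ.HasTemperateGrowth] {u : E → ℝ} (hu : u.HasTemperateGrowth)
    (f : 𝓢(E, F)) : Integrable (fun x ↦ u x • f x) μ :=
  (SchwartzMap.smulLeftCLM F u f).integrable.congr
    (.of_forall (SchwartzMap.smulLeftCLM_apply_apply hu f))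

theorem integral_smul_deriv_schwartz_eq_neg {u u' : ℝ → ℝ} (hu : u.HasTemperateGrowth)
    (hu' : u'.HasTemperateGrowth) (hderiv : ∀ x, HasDerivAt u (u' x) x) (f : 𝓢(ℝ, F)) :
    ∫ x, u x • deriv f x = -∫ x, u' x • f x :=
  integral_bilinear_hasDerivAt_right_eq_neg_left_of_integrable
    (L := ContinuousLinearMap.lsmul ℝ ℝ) (fun x _ ↦ hderiv x) (fun x _ ↦ f.hasDerivAt x)
    (integrable_smul_schwartz hu (SchwartzMap.derivCLM ℝ F f))
    (integrable_smul_schwartz hu' f) (integrable_smul_schwartz hu f)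

theorem integral_deriv_schwartz (f : 𝓢(ℝ, F)) : ∫ x, deriv f x = 0 := by
  simpa using integral_smul_deriv_schwartz_eq_neg (.const 1) (.const 0)
    (fun x ↦ hasDerivAt_const x (1 : ℝ)) f

theorem integral_id_smul_deriv_schwartz (f : 𝓢(ℝ, F)) :
    ∫ x, x • deriv f x = -∫ x, f x := by
  simpa using integral_smul_deriv_schwartz_eq_neg .id' (.const 1) hasDerivAt_id' f

theorem coe_iterate_derivCLM (n : ℕ) (f : 𝓢(ℝ, F)) :
    ⇑((SchwartzMap.derivCLM ℝ F)^[n] f) = iteratedDeriv n f := by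
  induction n with
  | zero => simp
  | succ n ih =>
    ext x
    rw [Function.iterate_succ_apply', SchwartzMap.derivCLM_apply, ih, iteratedDeriv_succ]

theorem integrable_iteratedDeriv_schwartz (n : ℕ) (f : 𝓢(ℝ, F)) :
    Integrable (iteratedDeriv n f) :=
  coe_iterate_derivCLM n f ▸ ((SchwartzMap.derivCLM ℝ F)^[n] f).integrable

theorem integral_iteratedDeriv_schwartz {n : ℕ} (hn : n ≠ 0) (f : 𝓢(ℝ, F)) :
    ∫ x, iteratedDeriv n f x = 0 := by
  obtain ⟨m, rfl⟩ := Nat.exists_eq_succ_of_ne_zero hn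
  rw [iteratedDeriv_succ, ← coe_iterate_derivCLM]
  exact integral_deriv_schwartz _

end SchwartzIntegral

theorem stmt_0_general {F : Type*} [NormedAddCommGroup F] [NormedSpace ℝ F] {n : ℕ} (hn : n ≠ 0)
    (a b c : ℝ) (f : 𝓢(ℝ, F)) (g : ℝ → F)
    (hode : ∀ y, c • iteratedDeriv n f y + a • y • deriv f y + b • f y + g y = 0) :
    ∫ y, g y = (a - b) • ∫ y, f y := by
  have hg : g = fun y ↦ -(c • iteratedDeriv n f y + a • y • deriv f y + b • f y) :=
    funext fun y ↦ eq_neg_of_add_eq_zero_right (hode y)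
  have top_int : Integrable fun y ↦ c • iteratedDeriv n f y :=
    (integrable_iteratedDeriv_schwartz n f).smul c
  have drift_int : Integrable fun y ↦ a • y • deriv f y :=
    (integrable_smul_schwartz .id' (SchwartzMap.derivCLM ℝ F f)).smul a
  have linear_int : Integrable fun y ↦ b • f y := f.integrable.smul b
  rw [hg, integral_neg, integral_add (top_int.fun_add drift_int) linear_int,
    integral_add top_int drift_int, integral_smul, integral_smul, integral_smul,
    integral_iteratedDeriv_schwartz hn, integral_id_smul_deriv_schwartz]
  module

/-- If `f` is a Schwartz function solving the fourth-order similarity ODE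
`-f'''' + (1/4)·y·f' + (1/(p-1))·f + |f|^p = 0` on ℝ with `p > 1`, then
`∫ |f|^p = ((p-5)/(4(p-1)))·∫ f`. -/
theorem stmt_0 (p : ℝ) (hp : 1 < p) (f : SchwartzMap ℝ ℝ)
    (hode : ∀ y : ℝ,
      -(iteratedDeriv 4 (⇑f) y) + (1 / 4) * y * deriv (⇑f) y
        + (1 / (p - 1)) * f y + |f y| ^ p = 0) :
    ∫ y : ℝ, |f y| ^ p = ((p - 5) / (4 * (p - 1))) * ∫ y : ℝ, f y := by
  have coeff_eq : (p - 5) / (4 * (p - 1)) = 1 / 4 - 1 / (p - 1) := by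
    field_simp [sub_ne_zero.mpr hp.ne']
    ring
  rw [coeff_eq]
  exact stmt_0_general four_ne_zero (1 / 4) (1 / (p - 1)) (-1) f _ fun y ↦ by
    simpa [mul_assoc] using hode y
end

section
/- Let m ≥ 1 be a natural number and let F : ℝ → ℝ be a smooth function satisfying the one-dimensional kernel equation -(-1)^m·F^{(2m)}(y) + (1/(2m))·y·F'(y) + (1/(2m))·F(y) = 0 for all y ∈ ℝ, where F^{(k)} denotes the k-th derivative. Then for every natural number l ≥ 0, the l-th derivative v = F^{(l)} is an eigenfunction of the Hermite-type operator B with eigenvalue -l/(2m); that is, -(-1)^m·v^{(2m)}(y) + (1/(2m))·y·v'(y) + (1/(2m))·v(y) = -(l/(2m))·v(y) for all y ∈ ℝ. -/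
/-!
Differentiating `B w = a w⁽ⁿ⁾ + b y w' + c w` gives `(B w)' = B w' + b w'`, since only the
coefficient `b y` is not constant. Hence each derivative lowers an eigenvalue of `B` by `b`, and the
kernel equation is the case of the eigenvalue `0` with `b = 1 / (2m)`.
-/

section HermiteOperator

variable {𝕜 E : Type*} [NontriviallyNormedField 𝕜] [NormedAddCommGroup E] [NormedSpace 𝕜 E]

/-- The Hermite-type differential operator `w ↦ a w⁽ⁿ⁾ + b y w' + c w`. The operator `B` of the
poly-harmonic heat equation is the case `n = 2m`, `a = -(-1)ᵐ`, `b = c = 1 / (2m)`. -/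
noncomputable def hermiteOperator (n : ℕ) (a b c : 𝕜) (w : 𝕜 → E) (y : 𝕜) : E :=
  a • iteratedDeriv n w y + (b * y) • deriv w y + c • w y

variable {n : ℕ} {a b c : 𝕜} {w : 𝕜 → E}

theorem hasDerivAt_iteratedDeriv {k : ℕ} (hw : ContDiff 𝕜 (k + 1 : ℕ) w) (y : 𝕜) :
    HasDerivAt (iteratedDeriv k w) (iteratedDeriv (k + 1) w y) y := by
  rw [iteratedDeriv_succ]
  exact (hw.differentiable_iteratedDeriv k (mod_cast k.lt_succ_self) y).hasDerivAt

theorem hasDerivAt_hermiteOperator (hw : ContDiff 𝕜 (max n 1 + 1 : ℕ) w) (y : 𝕜) :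
    HasDerivAt (hermiteOperator n a b c w)
      (hermiteOperator n a b c (deriv w) y + b • deriv w y) y := by
  have hasDerivAt_of_le {k : ℕ} (hk : k ≤ max n 1) :
      HasDerivAt (iteratedDeriv k w) (iteratedDeriv k (deriv w) y) y := by
    rw [← iteratedDeriv_succ']
    exact hasDerivAt_iteratedDeriv (hw.of_le (by gcongr)) y
  have h_top := hasDerivAt_of_le (le_max_left n 1)
  have h_one := hasDerivAt_of_le (le_max_right n 1)
  have h_zero := hasDerivAt_of_le (Nat.zero_le (max n 1))
  rw [iteratedDeriv_one, iteratedDeriv_one] at h_one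
  rw [iteratedDeriv_zero, iteratedDeriv_zero] at h_zero
  refine (((h_top.const_smul a).add (((hasDerivAt_id y).const_mul b).smul h_one)).add
    (h_zero.const_smul c)).congr_deriv ?_
  simp only [hermiteOperator, id_eq, mul_one]
  abel

theorem iteratedDeriv_hermiteOperator {l : ℕ} (hw : ContDiff 𝕜 (max n 1 + l : ℕ) w) :
    iteratedDeriv l (hermiteOperator n a b c w) =
      hermiteOperator n a b c (iteratedDeriv l w) + (l * b) • iteratedDeriv l w := by
  induction l with
  | zero => simp
  | succ l ih =>
    have hw_iter : ContDiff 𝕜 (max n 1 + 1 : ℕ) (iteratedDeriv l w) := by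
      rw [iteratedDeriv_eq_iterate]
      exact ContDiff.iterate_deriv' _ l (hw.of_le (mod_cast by omega))
    have hw_deriv (y : 𝕜) : HasDerivAt (iteratedDeriv l w) (iteratedDeriv (l + 1) w y) y :=
      hasDerivAt_iteratedDeriv (hw.of_le (mod_cast by omega)) y
    ext y
    rw [iteratedDeriv_succ, ih (hw.of_le (mod_cast by omega)),
      ((hasDerivAt_hermiteOperator hw_iter y).add ((hw_deriv y).const_smul (l * b))).deriv,
      ← iteratedDeriv_succ, Pi.add_apply, Pi.smul_apply, add_assoc, ← add_smul]
    congr 2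
    push_cast
    ring

theorem stmt_3_general (l : ℕ) {μ : 𝕜} (hw : ContDiff 𝕜 (max n 1 + l : ℕ) w)
    (h_eigen : hermiteOperator n a b c w = μ • w) :
    hermiteOperator n a b c (iteratedDeriv l w) = (μ - l * b) • iteratedDeriv l w := by
  have h_comm := iteratedDeriv_hermiteOperator (a := a) (b := b) (c := c) hw
  have h_smul : iteratedDeriv l (μ • w) = μ • iteratedDeriv l w :=
    funext fun _ ↦ iteratedDeriv_const_smul_field μ w
  rw [h_eigen, h_smul] at h_comm
  rw [sub_smul, h_comm, add_sub_cancel_right]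

end HermiteOperator

/-- If the smooth function `F` satisfies the 1D kernel equation `B F = 0`,
where `B w = -(-1)^m w^{(2m)} + (1/(2m))·y·w' + (1/(2m))·w`, then for every `l ≥ 0`
the derivative `F^{(l)}` is an eigenfunction of `B` with eigenvalue `-l/(2m)`. -/
theorem stmt_3 (m : ℕ) (hm : 1 ≤ m) (F : ℝ → ℝ) (hF : ContDiff ℝ (⊤ : ℕ∞) F)
    (hker : ∀ y : ℝ,
      -((-1 : ℝ) ^ m * iteratedDeriv (2 * m) F y)
        + (1 / (2 * (m : ℝ))) * y * deriv F y
        + (1 / (2 * (m : ℝ))) * F y = 0) :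
    ∀ l : ℕ, ∀ y : ℝ,
      -((-1 : ℝ) ^ m * iteratedDeriv (2 * m) (iteratedDeriv l F) y)
        + (1 / (2 * (m : ℝ))) * y * deriv (iteratedDeriv l F) y
        + (1 / (2 * (m : ℝ))) * iteratedDeriv l F y
      = -((l : ℝ) / (2 * (m : ℝ))) * iteratedDeriv l F y := by
  have h_eigen :
      hermiteOperator (2 * m) (-(-1 : ℝ) ^ m) (1 / (2 * m)) (1 / (2 * m)) F = (0 : ℝ) • F := by
    ext y
    simpa [hermiteOperator] using hker y
  intro l y
  have h_deriv := congrFun (stmt_3_general l (hF.of_le (mod_cast le_top)) h_eigen) y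
  simp only [hermiteOperator, Pi.smul_apply, smul_eq_mul] at h_deriv
  linear_combination h_deriv
end

section
/- Let m ≥ 1 be a natural number, let λ ≠ μ be real numbers, let ψ : ℝ → ℝ be a Schwartz function satisfying -(-1)^m·ψ^{(2m)}(y) + (1/(2m))·y·ψ'(y) + (1/(2m))·ψ(y) = λ·ψ(y) for all y, and let φ : ℝ → ℝ be a polynomial function satisfying -(-1)^m·φ^{(2m)}(y) - (1/(2m))·y·φ'(y) = μ·φ(y) for all y. Then ψ and φ are orthogonal in the dual L²(ℝ) pairing: ∫_ℝ ψ(y)·φ(y) dy = 0. -/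
open MeasureTheory

/-!
Integration by parts moves `B` from a Schwartz function onto any smooth function of temperate
growth, where it becomes `B*`: each of the `n` derivatives in the leading term costs a sign, and
since `y w' + w = (y w)'`, the lower-order part of `B` is a single derivative. Hence
`λ ∫ ψ φ = ∫ (B ψ) φ = ∫ ψ (B* φ) = μ ∫ ψ φ`.
-/

open scoped SchwartzMap

section TemperateGrowth

theorem hasTemperateGrowth_polynomial_eval {R : Type*} [NormedCommRing R] [NormedAlgebra ℝ R]
    (p : Polynomial R) : (fun x ↦ p.eval x).HasTemperateGrowth := by
  simp only [Polynomial.eval_eq_sum, Polynomial.sum_def]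
  fun_prop

variable {F : Type*} [NormedAddCommGroup F] [NormedSpace ℝ F] {g : ℝ → F}

theorem hasTemperateGrowth_deriv (hg : g.HasTemperateGrowth) :
    (deriv g).HasTemperateGrowth := by
  refine ⟨(contDiff_infty_iff_deriv.mp hg.1).2, fun n ↦ ?_⟩
  obtain ⟨k, C, hC⟩ := hg.2 (n + 1)
  refine ⟨k, C, fun x ↦ ?_⟩
  simpa only [norm_iteratedFDeriv_eq_norm_iteratedDeriv, iteratedDeriv_succ'] using hC x

theorem hasTemperateGrowth_iteratedDeriv (hg : g.HasTemperateGrowth) (n : ℕ) :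
    (iteratedDeriv n g).HasTemperateGrowth := by
  induction n with
  | zero => simpa only [iteratedDeriv_zero] using hg
  | succ n ih => simpa only [iteratedDeriv_succ] using hasTemperateGrowth_deriv ih

end TemperateGrowth

section SchwartzDeriv

variable {F : Type*} [NormedAddCommGroup F] [NormedSpace ℝ F]

theorem deriv_smulLeftCLM_id (f : 𝓢(ℝ, F)) (y : ℝ) :
    deriv (SchwartzMap.smulLeftCLM F (fun x : ℝ ↦ x) f) y = y • deriv f y + f y := by
  rw [SchwartzMap.smulLeftCLM_apply (by fun_prop)]
  simpa only [one_smul] using ((hasDerivAt_id' y).fun_smul (f.hasDerivAt y)).deriv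

end SchwartzDeriv

section IntegrationByParts

variable {A : Type*} [NormedRing A] [NormedAlgebra ℝ A]

theorem integrable_schwartz_mul {E : Type*} [NormedAddCommGroup E] [NormedSpace ℝ E]
    [MeasurableSpace E] [BorelSpace E] [SecondCountableTopology E] {μ : Measure E}
    [μ.HasTemperateGrowth] (f : 𝓢(E, A)) {g : E → A} (hg : g.HasTemperateGrowth) :
    Integrable (fun x ↦ f x * g x) μ :=
  (SchwartzMap.bilinLeftCLM (ContinuousLinearMap.mul ℝ A) hg f).integrable

variable (f : 𝓢(ℝ, A)) {g : ℝ → A}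

theorem integral_deriv_schwartz_mul (hg : g.HasTemperateGrowth) :
    ∫ y, deriv f y * g y = -∫ y, f y * deriv g y := by
  have parts := integral_mul_deriv_eq_deriv_mul_of_integrable
    (fun y _ ↦ f.hasDerivAt y)
    (fun y _ ↦ (hg.1.differentiable (by simp) y).hasDerivAt)
    (integrable_schwartz_mul f (hasTemperateGrowth_deriv hg))
    (integrable_schwartz_mul (SchwartzMap.derivCLM ℝ A f) hg)
    (integrable_schwartz_mul f hg)
  rw [parts, neg_neg]

theorem integral_iteratedDeriv_schwartz_mul (hg : g.HasTemperateGrowth) (n : ℕ) :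
    ∫ y, iteratedDeriv n f y * g y = (-1) ^ n * ∫ y, f y * iteratedDeriv n g y := by
  induction n generalizing g with
  | zero => simp
  | succ n ih =>
    have peel : ∫ y, iteratedDeriv (n + 1) f y * g y
        = -∫ y, iteratedDeriv n f y * deriv g y := by
      simpa only [iteratedDeriv_succ, coe_iterate_derivCLM] using
        integral_deriv_schwartz_mul ((SchwartzMap.derivCLM ℝ A)^[n] f) hg
    rw [peel, ih (hasTemperateGrowth_deriv hg), iteratedDeriv_succ', pow_succ', neg_one_mul,
      neg_mul]

theorem integrable_smul_deriv_add_schwartz_mul (hg : g.HasTemperateGrowth) :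
    Integrable fun y ↦ (y • deriv f y + f y) * g y := by
  simpa only [SchwartzMap.derivCLM_apply, deriv_smulLeftCLM_id] using
    integrable_schwartz_mul (μ := volume)
      (SchwartzMap.derivCLM ℝ A (SchwartzMap.smulLeftCLM A (fun x : ℝ ↦ x) f)) hg

theorem integral_smul_deriv_add_schwartz_mul (hg : g.HasTemperateGrowth) :
    ∫ y, (y • deriv f y + f y) * g y = -∫ y, f y * (y • deriv g y) := by
  have parts := integral_deriv_schwartz_mul (SchwartzMap.smulLeftCLM A (fun x : ℝ ↦ x) f) hg
  simpa only [deriv_smulLeftCLM_id,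
    SchwartzMap.smulLeftCLM_apply_apply Function.HasTemperateGrowth.id', smul_mul_assoc,
    mul_smul_comm] using parts

end IntegrationByParts

section HermiteOp

variable {𝕜 : Type*} [RCLike 𝕜]

/-- The Hermite-type operator `B w = a w⁽ⁿ⁾ + c (y w' + w)` of order `n`. The rescaled linear heat
operator of order `2m` is the case `n = 2m`, `a = -(-1)^m`, `c = 1 / (2m)`. -/
noncomputable def hermiteOp (n : ℕ) (a c : 𝕜) (w : ℝ → 𝕜) (y : ℝ) : 𝕜 :=
  a * iteratedDeriv n w y + c * (y • deriv w y + w y)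

/-- The operator `B* w = (-1)ⁿ a w⁽ⁿ⁾ - c y w'`, the formal adjoint of `hermiteOp n a c` for the
bilinear (not sesquilinear) pairing `∫ u v`. -/
noncomputable def hermiteOpAdjoint (n : ℕ) (a c : 𝕜) (w : ℝ → 𝕜) (y : ℝ) : 𝕜 :=
  (-1) ^ n * a * iteratedDeriv n w y - c * (y • deriv w y)

theorem integral_hermiteOp_mul (n : ℕ) (a c : 𝕜) (f : 𝓢(ℝ, 𝕜)) {g : ℝ → 𝕜}
    (hg : g.HasTemperateGrowth) :
    ∫ y, hermiteOp n a c f y * g y = ∫ y, f y * hermiteOpAdjoint n a c g y := by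
  have integrable_iteratedDeriv_mul : Integrable fun y ↦ iteratedDeriv n f y * g y := by
    simpa only [coe_iterate_derivCLM] using
      integrable_schwartz_mul (μ := volume) ((SchwartzMap.derivCLM ℝ 𝕜)^[n] f) hg
  have integrable_mul_iteratedDeriv : Integrable fun y ↦ f y * iteratedDeriv n g y :=
    integrable_schwartz_mul f (hasTemperateGrowth_iteratedDeriv hg n)
  have integrable_mul_smul_deriv : Integrable fun y ↦ f y * (y • deriv g y) :=
    integrable_schwartz_mul f
      (Function.HasTemperateGrowth.id'.smul (hasTemperateGrowth_deriv hg))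
  calc ∫ y, hermiteOp n a c f y * g y
    _ = a * (∫ y, iteratedDeriv n f y * g y) + c * ∫ y, (y • deriv f y + f y) * g y := by
      simp only [hermiteOp, add_mul (a * _), mul_assoc]
      rw [integral_add (integrable_iteratedDeriv_mul.const_mul a)
        ((integrable_smul_deriv_add_schwartz_mul f hg).const_mul c),
        integral_const_mul, integral_const_mul]
    _ = (-1) ^ n * a * (∫ y, f y * iteratedDeriv n g y) - c * ∫ y, f y * (y • deriv g y) := by
      rw [integral_iteratedDeriv_schwartz_mul f hg, integral_smul_deriv_add_schwartz_mul f hg]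
      ring
    _ = ∫ y, f y * hermiteOpAdjoint n a c g y := by
      simp only [hermiteOpAdjoint, mul_sub, mul_left_comm (f _)]
      rw [integral_sub (integrable_mul_iteratedDeriv.const_mul _)
        (integrable_mul_smul_deriv.const_mul c), integral_const_mul, integral_const_mul]

theorem stmt_17_general (n : ℕ) (a c : 𝕜) {lam mu : 𝕜} (hne : lam ≠ mu) (ψ : 𝓢(ℝ, 𝕜))
    (hψ : ∀ y, hermiteOp n a c ψ y = lam * ψ y) {φ : ℝ → 𝕜} (hφ_growth : φ.HasTemperateGrowth)
    (hφ : ∀ y, hermiteOpAdjoint n a c φ y = mu * φ y) :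
    ∫ y, ψ y * φ y = 0 := by
  have eigenvalues_agree : lam * ∫ y, ψ y * φ y = mu * ∫ y, ψ y * φ y := by
    simpa only [hψ, hφ, mul_assoc, mul_left_comm (ψ _), integral_const_mul] using
      integral_hermiteOp_mul n a c ψ hφ_growth
  exact (mul_eq_mul_right_iff.mp eigenvalues_agree).resolve_left hne

end HermiteOp

/-- if the Schwartz function `ψ` is an eigenfunction of
`B w = -(-1)^m w^{(2m)} + (1/(2m))·y·w' + (1/(2m))·w` with eigenvalue `λ`, and the
polynomial `φ` is an eigenfunction of `B* w = -(-1)^m w^{(2m)} - (1/(2m))·y·w'` with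
eigenvalue `μ ≠ λ`, then `∫ ψ·φ = 0`. -/
theorem stmt_17 (m : ℕ) (hm : 1 ≤ m) (lam mu : ℝ) (hne : lam ≠ mu)
    (ψ : SchwartzMap ℝ ℝ)
    (hψ : ∀ y : ℝ,
      -((-1 : ℝ) ^ m * iteratedDeriv (2 * m) (⇑ψ) y)
        + (1 / (2 * (m : ℝ))) * y * deriv (⇑ψ) y
        + (1 / (2 * (m : ℝ))) * ψ y = lam * ψ y)
    (φ : Polynomial ℝ)
    (hφ : ∀ y : ℝ,
      -((-1 : ℝ) ^ m * iteratedDeriv (2 * m) (fun z : ℝ => φ.eval z) y)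
        - (1 / (2 * (m : ℝ))) * y * deriv (fun z : ℝ => φ.eval z) y
      = mu * φ.eval y) :
    ∫ y : ℝ, ψ y * φ.eval y = 0 := by
  refine stmt_17_general (2 * m) (-(-1) ^ m) (1 / (2 * (m : ℝ))) hne ψ (fun y ↦ ?_)
    (hasTemperateGrowth_polynomial_eval φ) fun y ↦ ?_
  · rw [← hψ y, hermiteOp, smul_eq_mul]; ring
  · rw [← hφ y, hermiteOpAdjoint, (even_two_mul m).neg_one_pow, smul_eq_mul]; ring
end
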